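/- Let G and Q be groups, ρ : G → Q a group homomorphism with kernel K, ω a normalized U(1)-valued 3-cocycle on Q, and c : G × G → U(1) a normalized 2-cochain with dc(f,g,h) = ω(ρ(f),ρ(g),ρ(h)) for all f,g,h ∈ G. Then for all g ∈ G and all k, l ∈ K: c(g,k)·c(gkg⁻¹,g)⁻¹·c(g,l)·c(glg⁻¹,g)⁻¹ = c(g,kl)·c(k,l)·c(gklg⁻¹,g)⁻¹·c(gkg⁻¹,glg⁻¹)⁻¹. -/

import Mathlib

/-!
Conjugation by `g` is homotopic to the identity on group cochains, the homotopy being the slant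
product with `g`. For a 2-cochain `c` this says that the coboundary of the slant product of `c` is
`c(k,l)·c(gkg⁻¹,glg⁻¹)⁻¹` times the slant product of `dc`. Each value of `dc` entering the latter at
`(k, l)` has `k` or `gkg⁻¹` among its arguments, so when `dc` is pulled back from a normalized
cochain on a quotient by a subgroup containing `k`, that factor is `1`.
-/

section SlantProduct

variable {G A : Type*} [CommGroup A]

/-- The coboundary `dc` of a 2-cochain `c` with trivial action on the coefficients, in the sign
convention inverse to the usual one. -/
def coboundary₂ [Mul G] (c : G → G → A) (f g h : G) : A :=
  (c g h)⁻¹ * c (f * g) h * (c f (g * h))⁻¹ * c f g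

variable [Group G]

/-- The slant product of a 2-cochain with `g`: the alternating product over the two ways of
inserting `g` into `(k)`, an argument being conjugated by `g` when it stands to the left of `g`. -/
def slant₂ (c : G → G → A) (g k : G) : A :=
  c g k * (c (g * k * g⁻¹) g)⁻¹

/-- The slant product of a 3-cochain with `g`: the alternating product over the three ways of
inserting `g` into `(k, l)`, an argument being conjugated by `g` when it stands to the left
of `g`. -/
def slant₃ (φ : G → G → G → A) (g k l : G) : A :=
  φ g k l * (φ (g * k * g⁻¹) g l)⁻¹ * φ (g * k * g⁻¹) (g * l * g⁻¹) g

theorem slant₂_mul_slant₂ (c : G → G → A) (g k l : G) :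
    slant₂ c g k * slant₂ c g l =
      slant₂ c g (k * l) * (c k l * (c (g * k * g⁻¹) (g * l * g⁻¹))⁻¹) *
        slant₃ (coboundary₂ c) g k l := by
  simp only [slant₂, slant₃, coboundary₂, inv_mul_cancel_right, conj_mul]
  apply Additive.ofMul.injective
  simp only [ofMul_mul, ofMul_inv]
  abel

theorem slant₃_eq_one_of_mem {K : Subgroup G} [K.Normal] {φ : G → G → G → A}
    (hφ_left : ∀ k ∈ K, ∀ g h, φ k g h = 1) (hφ_mid : ∀ k ∈ K, ∀ f h, φ f k h = 1)
    (g : G) {k : G} (hk : k ∈ K) (l : G) :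
    slant₃ φ g k l = 1 := by
  have hk_conj : g * k * g⁻¹ ∈ K := ‹K.Normal›.conj_mem k hk g
  simp only [slant₃, hφ_mid k hk, hφ_left _ hk_conj, inv_one, mul_one]

theorem jones_multiplicativity_identity_general {K : Subgroup G} [K.Normal] {c : G → G → A}
    (hdc_left : ∀ k ∈ K, ∀ g h, coboundary₂ c k g h = 1)
    (hdc_mid : ∀ k ∈ K, ∀ f h, coboundary₂ c f k h = 1)
    (g : G) {k : G} (hk : k ∈ K) (l : G) :
    c g k * (c (g * k * g⁻¹) g)⁻¹ * c g l * (c (g * l * g⁻¹) g)⁻¹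
      = c g (k * l) * c k l * (c (g * (k * l) * g⁻¹) g)⁻¹
          * (c (g * k * g⁻¹) (g * l * g⁻¹))⁻¹ := by
  calc
    _ = slant₂ c g k * slant₂ c g l := mul_assoc _ _ _
    _ = slant₂ c g (k * l) * (c k l * (c (g * k * g⁻¹) (g * l * g⁻¹))⁻¹) := by
      rw [slant₂_mul_slant₂, slant₃_eq_one_of_mem hdc_left hdc_mid g hk l, mul_one]
    _ = _ := by rw [slant₂, mul_mul_mul_comm, mul_assoc (c g (k * l) * c k l)]

end SlantProduct

/-- **Statement 14** (key computation in Lemma 3.2 of the paper).  If `c` is a normalized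
`U(1)`-valued 2-cochain on `G` whose coboundary is the pullback along `ρ : G → Q` of a
normalized 3-cocycle `ω` on `Q`, then for all `g ∈ G` and `k, l ∈ K = ker ρ`:
`c(g,k)·c(gkg⁻¹,g)⁻¹·c(g,l)·c(glg⁻¹,g)⁻¹ = c(g,kl)·c(k,l)·c(gklg⁻¹,g)⁻¹·c(gkg⁻¹,glg⁻¹)⁻¹`. -/
theorem jones_multiplicativity_identity
    {G Q : Type*} [Group G] [Group Q] (ρ : G →* Q)
    (ω : Q → Q → Q → Circle)
    (hω_norm : ∀ g h k, g = 1 ∨ h = 1 ∨ k = 1 → ω g h k = 1)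
    (hω_coc : ∀ g₁ g₂ g₃ g₄,
      ω (g₁ * g₂) g₃ g₄ * ω g₁ g₂ (g₃ * g₄)
        = ω g₂ g₃ g₄ * ω g₁ (g₂ * g₃) g₄ * ω g₁ g₂ g₃)
    (c : G → G → Circle)
    (hc_norm : ∀ g h, g = 1 ∨ h = 1 → c g h = 1)
    (hdc : ∀ f g h : G,
      (c g h)⁻¹ * c (f * g) h * (c f (g * h))⁻¹ * c f g = ω (ρ f) (ρ g) (ρ h)) :
    ∀ (g k l : G), k ∈ ρ.ker → l ∈ ρ.ker →
      c g k * (c (g * k * g⁻¹) g)⁻¹ * c g l * (c (g * l * g⁻¹) g)⁻¹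
        = c g (k * l) * c k l * (c (g * (k * l) * g⁻¹) g)⁻¹
            * (c (g * k * g⁻¹) (g * l * g⁻¹))⁻¹ := by
  intro g k l hk _
  exact jones_multiplicativity_identity_general
    (fun k hk g h ↦ (hdc k g h).trans (hω_norm _ _ _ (.inl hk)))
    (fun k hk f h ↦ (hdc f k h).trans (hω_norm _ _ _ (.inr (.inl hk)))) g hk l
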